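/- For every β>0 and every x ∈ Ξ°, the Hessian matrix ∇²F_β(x) equals [[1/(βx_0)+1/(βx_1)−3, 1/(βx_0)−3/2],[1/(βx_0)−3/2, 1/(βx_0)+1/(βx_2)−3]]; its determinant equals (1/β²)(1/(x_0x_1)+1/(x_0x_2)+1/(x_1x_2)) − (3/β)(1/x_0+1/x_1+1/x_2) + 27/4, and the trace of A·∇²F_β(x), where A = [[1,0],[−1,1]], equals (1/β)(1/x_0+1/x_1+1/x_2) − 9/2. In particular, det ∇²F_β(x) and the characteristic polynomial of A·∇²F_β(x) are symmetric functions of the triple (x_0,x_1,x_2). -/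

import Mathlib

/-!
Since `v₁` and `v₂` are unit vectors with `v₁ · v₂ = -1/2`, the energy is the quadratic form
`|ψ|² = a² - ab + b²` in `a = 2x₁ + x₂ - 1` and `b = x₁ + 2x₂ - 1` (`potF_eq`). On the open simplex
the entropy is smooth, and the gradient of `F_β` is
`(-3a/2 + (log 3x₁ - log 3x₀)/β, -3b/2 + (log 3x₂ - log 3x₀)/β)` (`potF_hasFDerivAt`).
The simplex is open, so this formula can be differentiated once more, which gives the Hessian
(`hessian_potF`).

The determinant and the trace then follow by algebra. As `det A = 1`, the characteristic polynomial
of `A · ∇²F_β` is determined by these two quantities. They are polynomials in the power sums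
`∑ 1/xᵢ` and `∑ 1/xᵢ²`, which depend only on the multiset `{x₀, x₁, x₂}`.
-/

/-- The spin value `v_k = (cos(2πk/3), sin(2πk/3))`. -/
noncomputable def potV (k : ℕ) : ℝ × ℝ :=
  (Real.cos (2 * Real.pi * k / 3), Real.sin (2 * Real.pi * k / 3))

/-- `ψ(x) = (2x₁+x₂−1)v₁ + (x₁+2x₂−1)v₂`. -/
noncomputable def potPsi (x : ℝ × ℝ) : ℝ × ℝ :=
  ((2 * x.1 + x.2 - 1) * (potV 1).1 + (x.1 + 2 * x.2 - 1) * (potV 2).1,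
   (2 * x.1 + x.2 - 1) * (potV 1).2 + (x.1 + 2 * x.2 - 1) * (potV 2).2)

/-- The entropy `S(x) = Σᵢ xᵢ log(3xᵢ)` with `x₀ = 1 − x₁ − x₂`
(the convention `t log t = 0` at `t = 0` holds since `Real.log 0 = 0`). -/
noncomputable def potS (x : ℝ × ℝ) : ℝ :=
  (1 - x.1 - x.2) * Real.log (3 * (1 - x.1 - x.2))
    + x.1 * Real.log (3 * x.1) + x.2 * Real.log (3 * x.2)

/-- The mean-field Potts potential `F_β(x) = −(1/2)|ψ(x)|² + (1/β)S(x)`. -/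
noncomputable def potF (β : ℝ) (x : ℝ × ℝ) : ℝ :=
  - (1 / 2) * ((potPsi x).1 ^ 2 + (potPsi x).2 ^ 2) + (1 / β) * potS x

/-- The open two-dimensional simplex `Ξ°`. -/
def simplexInt : Set (ℝ × ℝ) := {x | 0 < x.1 ∧ 0 < x.2 ∧ x.1 + x.2 < 1}

/-- The canonical basis of `ℝ × ℝ`. -/
noncomputable def eBasis : Fin 2 → ℝ × ℝ := ![(1, 0), (0, 1)]

/-- The Hessian matrix of a function `f : ℝ × ℝ → ℝ` at a point `x`. -/
noncomputable def hessian (f : ℝ × ℝ → ℝ) (x : ℝ × ℝ) : Matrix (Fin 2) (Fin 2) ℝ :=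
  Matrix.of fun i j => fderiv ℝ (fun y => fderiv ℝ f y (eBasis j)) x (eBasis i)

lemma potV_one : potV 1 = (-1 / 2, √3 / 2) := by
  have h : 2 * Real.pi * ((1 : ℕ) : ℝ) / 3 = Real.pi - Real.pi / 3 := by push_cast; ring
  unfold potV
  rw [h, Real.cos_pi_sub, Real.sin_pi_sub, Real.cos_pi_div_three, Real.sin_pi_div_three]
  norm_num

lemma potV_two : potV 2 = (-1 / 2, -(√3 / 2)) := by
  have h : 2 * Real.pi * ((2 : ℕ) : ℝ) / 3 = Real.pi / 3 + Real.pi := by push_cast; ring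
  unfold potV
  rw [h, Real.cos_add_pi, Real.sin_add_pi, Real.cos_pi_div_three, Real.sin_pi_div_three]
  norm_num

lemma potF_eq (β : ℝ) : potF β = fun y : ℝ × ℝ =>
    -(1 / 2) * ((2 * y.1 + y.2 - 1) ^ 2 - (2 * y.1 + y.2 - 1) * (y.1 + 2 * y.2 - 1)
      + (y.1 + 2 * y.2 - 1) ^ 2) + (1 / β) * potS y := by
  funext y
  have h3 : √3 ^ 2 = (3 : ℝ) := Real.sq_sqrt (by norm_num)
  simp only [potF, potPsi, potV_one, potV_two]
  linear_combination
    (-(1 / 8) * ((2 * y.1 + y.2 - 1) - (y.1 + 2 * y.2 - 1)) ^ 2) * h3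

/-- The first partial derivative of `F_β` on the open simplex. -/
noncomputable def potGradOne (β : ℝ) (y : ℝ × ℝ) : ℝ :=
  -(3 / 2) * (2 * y.1 + y.2 - 1)
    + (1 / β) * (Real.log (3 * y.1) - Real.log (3 * (1 - y.1 - y.2)))

/-- The second partial derivative of `F_β` on the open simplex. -/
noncomputable def potGradTwo (β : ℝ) (y : ℝ × ℝ) : ℝ :=
  -(3 / 2) * (y.1 + 2 * y.2 - 1)
    + (1 / β) * (Real.log (3 * y.2) - Real.log (3 * (1 - y.1 - y.2)))

lemma hasFDerivAt_x0 (y : ℝ × ℝ) : HasFDerivAt (fun z : ℝ × ℝ => 1 - z.1 - z.2)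
    (0 - ContinuousLinearMap.fst ℝ ℝ ℝ - ContinuousLinearMap.snd ℝ ℝ ℝ) y :=
  ((hasFDerivAt_const (1 : ℝ) y).sub hasFDerivAt_fst).sub hasFDerivAt_snd

lemma potF_hasFDerivAt (β : ℝ) {y : ℝ × ℝ} (hy : y ∈ simplexInt) :
    HasFDerivAt (potF β) (potGradOne β y • ContinuousLinearMap.fst ℝ ℝ ℝ
      + potGradTwo β y • ContinuousLinearMap.snd ℝ ℝ ℝ) y := by
  obtain ⟨h1, h2, h12⟩ := hy
  have h0 : 0 < 1 - y.1 - y.2 := by linarith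
  have d1 : HasFDerivAt (fun z : ℝ × ℝ => z.1) (ContinuousLinearMap.fst ℝ ℝ ℝ) y := hasFDerivAt_fst
  have d2 : HasFDerivAt (fun z : ℝ × ℝ => z.2) (ContinuousLinearMap.snd ℝ ℝ ℝ) y := hasFDerivAt_snd
  have d0 := hasFDerivAt_x0 y
  have da := ((d1.const_mul 2).add d2).sub_const 1
  have db := (d1.add (d2.const_mul 2)).sub_const 1
  have l0 := d0.mul ((d0.const_mul 3).log (by positivity))
  have l1 := d1.mul ((d1.const_mul 3).log (by positivity))
  have l2 := d2.mul ((d2.const_mul 3).log (by positivity))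
  rw [potF_eq]
  refine (((((da.pow 2).sub (da.mul db)).add (db.pow 2)).const_mul (-(1 / 2))).add
    (((l0.add l1).add l2).const_mul (1 / β))).congr_fderiv ?_
  ext <;> simp [potGradOne, potGradTwo] <;> field_simp <;> ring

lemma potGradOne_hasFDerivAt (β : ℝ) {y : ℝ × ℝ} (hy : y ∈ simplexInt) :
    HasFDerivAt (potGradOne β)
      ((1 / (β * (1 - y.1 - y.2)) + 1 / (β * y.1) - 3) • ContinuousLinearMap.fst ℝ ℝ ℝ
      + (1 / (β * (1 - y.1 - y.2)) - 3 / 2) • ContinuousLinearMap.snd ℝ ℝ ℝ) y := by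
  obtain ⟨h1, h2, h12⟩ := hy
  have h0 : 0 < 1 - y.1 - y.2 := by linarith
  have d1 : HasFDerivAt (fun z : ℝ × ℝ => z.1) (ContinuousLinearMap.fst ℝ ℝ ℝ) y := hasFDerivAt_fst
  have d2 : HasFDerivAt (fun z : ℝ × ℝ => z.2) (ContinuousLinearMap.snd ℝ ℝ ℝ) y := hasFDerivAt_snd
  have da := ((d1.const_mul 2).add d2).sub_const 1
  have l0 := ((hasFDerivAt_x0 y).const_mul 3).log (by positivity)
  have l1 := (d1.const_mul 3).log (by positivity)
  refine ((da.const_mul (-(3 / 2))).add ((l1.sub l0).const_mul (1 / β))).congr_fderiv ?_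
  ext <;> simp <;> field_simp <;> ring

lemma potGradTwo_hasFDerivAt (β : ℝ) {y : ℝ × ℝ} (hy : y ∈ simplexInt) :
    HasFDerivAt (potGradTwo β)
      ((1 / (β * (1 - y.1 - y.2)) - 3 / 2) • ContinuousLinearMap.fst ℝ ℝ ℝ
      + (1 / (β * (1 - y.1 - y.2)) + 1 / (β * y.2) - 3) • ContinuousLinearMap.snd ℝ ℝ ℝ) y := by
  obtain ⟨h1, h2, h12⟩ := hy
  have h0 : 0 < 1 - y.1 - y.2 := by linarith
  have d1 : HasFDerivAt (fun z : ℝ × ℝ => z.1) (ContinuousLinearMap.fst ℝ ℝ ℝ) y := hasFDerivAt_fst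
  have d2 : HasFDerivAt (fun z : ℝ × ℝ => z.2) (ContinuousLinearMap.snd ℝ ℝ ℝ) y := hasFDerivAt_snd
  have db := (d1.add (d2.const_mul 2)).sub_const 1
  have l0 := ((hasFDerivAt_x0 y).const_mul 3).log (by positivity)
  have l2 := (d2.const_mul 3).log (by positivity)
  refine ((db.const_mul (-(3 / 2))).add ((l2.sub l0).const_mul (1 / β))).congr_fderiv ?_
  ext <;> simp <;> field_simp <;> ring

lemma isOpen_simplexInt : IsOpen simplexInt :=
  (isOpen_lt continuous_const continuous_fst).inter
    ((isOpen_lt continuous_const continuous_snd).inter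
      (isOpen_lt (continuous_fst.add continuous_snd) continuous_const))

lemma hessian_potF (β : ℝ) {x : ℝ × ℝ} (hx : x ∈ simplexInt) :
    hessian (potF β) x =
      !![1 / (β * (1 - x.1 - x.2)) + 1 / (β * x.1) - 3, 1 / (β * (1 - x.1 - x.2)) - 3 / 2;
         1 / (β * (1 - x.1 - x.2)) - 3 / 2,
         1 / (β * (1 - x.1 - x.2)) + 1 / (β * x.2) - 3] := by
  have hmem := isOpen_simplexInt.mem_nhds hx
  have e0 : (fun y => fderiv ℝ (potF β) y (eBasis 0)) =ᶠ[nhds x] potGradOne β := by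
    filter_upwards [hmem] with y hy
    simp [(potF_hasFDerivAt β hy).fderiv, eBasis]
  have e1 : (fun y => fderiv ℝ (potF β) y (eBasis 1)) =ᶠ[nhds x] potGradTwo β := by
    filter_upwards [hmem] with y hy
    simp [(potF_hasFDerivAt β hy).fderiv, eBasis]
  have f0 := e0.fderiv_eq.trans (potGradOne_hasFDerivAt β hx).fderiv
  have f1 := e1.fderiv_eq.trans (potGradTwo_hasFDerivAt β hx).fderiv
  ext i j
  fin_cases i <;> fin_cases j <;> simp [hessian, f0, f1] <;> simp [eBasis]

lemma det_hessian_potF (β : ℝ) (hβ : 0 < β) {x : ℝ × ℝ} (hx : x ∈ simplexInt) :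
    (hessian (potF β) x).det =
      (1 / β ^ 2) * (1 / ((1 - x.1 - x.2) * x.1) + 1 / ((1 - x.1 - x.2) * x.2)
          + 1 / (x.1 * x.2))
        - (3 / β) * (1 / (1 - x.1 - x.2) + 1 / x.1 + 1 / x.2) + 27 / 4 := by
  rw [hessian_potF β hx, Matrix.det_fin_two_of]
  obtain ⟨h1, h2, h12⟩ := hx
  have h0 : 0 < 1 - x.1 - x.2 := by linarith
  generalize 1 - x.1 - x.2 = x0 at *
  field_simp
  ring

lemma trace_hessian_potF (β : ℝ) {x : ℝ × ℝ} (hx : x ∈ simplexInt) :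
    ((!![1, 0; -1, 1] : Matrix (Fin 2) (Fin 2) ℝ) * hessian (potF β) x).trace =
      (1 / β) * (1 / (1 - x.1 - x.2) + 1 / x.1 + 1 / x.2) - 9 / 2 := by
  rw [hessian_potF β hx]
  simp only [Matrix.trace_fin_two, Matrix.mul_apply, Fin.sum_univ_two, Matrix.of_apply,
    Matrix.cons_val_zero, Matrix.cons_val_one, Matrix.cons_val', Matrix.cons_val_fin_one,
    one_div, mul_inv]
  ring

/-- explicit formula for the Hessian of `F_β`, for its determinant and for the
trace of `A · ∇²F_β(x)` with `A = [[1,0],[−1,1]]`; in particular `det ∇²F_β(x)` and the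
characteristic polynomial of `A · ∇²F_β(x)` are symmetric functions of `(x₀,x₁,x₂)`. -/
theorem potts_hessian_formulas (β : ℝ) (hβ : 0 < β) (x : ℝ × ℝ) (hx : x ∈ simplexInt) :
    hessian (potF β) x =
      !![1 / (β * (1 - x.1 - x.2)) + 1 / (β * x.1) - 3, 1 / (β * (1 - x.1 - x.2)) - 3 / 2;
         1 / (β * (1 - x.1 - x.2)) - 3 / 2, 1 / (β * (1 - x.1 - x.2)) + 1 / (β * x.2) - 3] ∧
    (hessian (potF β) x).det =
      (1 / β ^ 2) * (1 / ((1 - x.1 - x.2) * x.1) + 1 / ((1 - x.1 - x.2) * x.2)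
          + 1 / (x.1 * x.2))
        - (3 / β) * (1 / (1 - x.1 - x.2) + 1 / x.1 + 1 / x.2) + 27 / 4 ∧
    ((!![1, 0; -1, 1] : Matrix (Fin 2) (Fin 2) ℝ) * hessian (potF β) x).trace =
      (1 / β) * (1 / (1 - x.1 - x.2) + 1 / x.1 + 1 / x.2) - 9 / 2 ∧
    (∀ y ∈ simplexInt,
      ({1 - x.1 - x.2, x.1, x.2} : Multiset ℝ) = {1 - y.1 - y.2, y.1, y.2} →
      (hessian (potF β) x).det = (hessian (potF β) y).det ∧
      ((!![1, 0; -1, 1] : Matrix (Fin 2) (Fin 2) ℝ) * hessian (potF β) x).charpoly =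
        ((!![1, 0; -1, 1] : Matrix (Fin 2) (Fin 2) ℝ) * hessian (potF β) y).charpoly) := by
  have key : ∀ y ∈ simplexInt,
      ({1 - x.1 - x.2, x.1, x.2} : Multiset ℝ) = {1 - y.1 - y.2, y.1, y.2} →
      (hessian (potF β) x).det = (hessian (potF β) y).det ∧
      ((!![1, 0; -1, 1] : Matrix (Fin 2) (Fin 2) ℝ) * hessian (potF β) x).trace =
        ((!![1, 0; -1, 1] : Matrix (Fin 2) (Fin 2) ℝ) * hessian (potF β) y).trace := by
    intro y hy h
    have p1 := congrArg (fun s : Multiset ℝ => (s.map fun t => t⁻¹).sum) h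
    have p2 := congrArg (fun s : Multiset ℝ => (s.map fun t => (t⁻¹) ^ 2).sum) h
    simp only [Multiset.insert_eq_cons, Multiset.map_cons, Multiset.map_singleton,
      Multiset.sum_cons, Multiset.sum_singleton] at p1 p2
    rw [det_hessian_potF β hβ hx, det_hessian_potF β hβ hy, trace_hessian_potF β hx,
      trace_hessian_potF β hy]
    simp only [mul_inv, div_eq_mul_inv]
    generalize (1 - x.1 - x.2)⁻¹ = a0 at *
    generalize (1 - y.1 - y.2)⁻¹ = b0 at *
    constructor
    -- The second elementary symmetric function is `(p₁² - p₂) / 2` in terms of power sums.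
    · linear_combination
        ((β ^ 2)⁻¹ / 2 * (a0 + (x.1⁻¹ + x.2⁻¹) + (b0 + (y.1⁻¹ + y.2⁻¹))) - 3 * β⁻¹) * p1
          - (β ^ 2)⁻¹ / 2 * p2
    · linear_combination β⁻¹ * p1
  refine ⟨hessian_potF β hx, det_hessian_potF β hβ hx, trace_hessian_potF β hx,
    fun y hy h => ?_⟩
  obtain ⟨hdet, htr⟩ := key y hy h
  refine ⟨hdet, ?_⟩
  rw [Matrix.charpoly_fin_two, Matrix.charpoly_fin_two, htr, Matrix.det_mul, Matrix.det_mul, hdet]
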